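/- arXiv:1609.06355 — 2 statements merged into one kernel-verified Lean document; each statement's English description precedes it below -/
import Mathlib

section
/- If C : {0,1}^k → {0,1}^n is a (q, c, η)-smooth code, then C is also a (q, η/(2c), η/2)-locally decodable code. -/
/-- A randomized non-adaptive `q`-query decoder for codewords in `{0,1}^n`, modeled as a
finitely supported probability distribution over pairs `(S, g)` where `S` is the query set
(of size at most `q`) and `g` is an output function depending only on the coordinates in `S`. -/
structure Decoder (n q : ℕ) where
  p : Finset (Fin n) × ((Fin n → Bool) → Bool) → ℝ
  nonneg : ∀ a, 0 ≤ p a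
  sum_one : ∑ a, p a = 1
  query_bound : ∀ a, p a ≠ 0 → a.1.card ≤ q
  local_dep : ∀ a, p a ≠ 0 → ∀ y y' : Fin n → Bool, (∀ j ∈ a.1, y j = y' j) → a.2 y = a.2 y'

/-- The probability that the decoder `D`, run on input `y`, outputs the bit `b`. -/
noncomputable def Decoder.correctProb {n q : ℕ} (D : Decoder n q) (y : Fin n → Bool)
    (b : Bool) : ℝ :=
  ∑ a : Finset (Fin n) × ((Fin n → Bool) → Bool), if a.2 y = b then D.p a else 0

/-- The probability that the decoder `D` queries coordinate `j`. -/
noncomputable def Decoder.queryProb {n q : ℕ} (D : Decoder n q) (j : Fin n) : ℝ :=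
  ∑ a : Finset (Fin n) × ((Fin n → Bool) → Bool), if j ∈ a.1 then D.p a else 0

/-- `C : {0,1}^k → {0,1}^n` is a `(q,δ,η)`-locally decodable code. -/
def IsLDC (k n q : ℕ) (δ η : ℝ) (C : (Fin k → Bool) → Fin n → Bool) : Prop :=
  ∀ i : Fin k, ∃ D : Decoder n q,
    ∀ x : Fin k → Bool, ∀ y : Fin n → Bool,
      ((Finset.univ.filter fun j => y j ≠ C x j).card : ℝ) ≤ δ * n →
      1/2 + η ≤ D.correctProb y (x i)

/-- `C : {0,1}^k → {0,1}^n` is a `(q,c,η)`-smooth code. -/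
def IsSmoothCode (k n q : ℕ) (c η : ℝ) (C : (Fin k → Bool) → Fin n → Bool) : Prop :=
  ∀ i : Fin k, ∃ D : Decoder n q,
    (∀ x : Fin k → Bool, 1/2 + η ≤ D.correctProb (C x) (x i)) ∧
    ∀ j : Fin n, D.queryProb j ≤ c / n

/-- `C : {0,1}^k → {0,1}^n` is a `(q,c,η)`-average-case smooth code: the success probability
`1/2 + η` is only required on average over a uniform message `x` and uniform index `i`. -/
def IsAvgSmoothCode (k n q : ℕ) (c η : ℝ) (C : (Fin k → Bool) → Fin n → Bool) : Prop :=
  ∃ D : Fin k → Decoder n q,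
    (∀ i : Fin k, ∀ j : Fin n, (D i).queryProb j ≤ c / n) ∧
    1/2 + η ≤ (∑ x : Fin k → Bool, ∑ i : Fin k, (D i).correctProb (C x) (x i)) / (2^k * k)

/-!
A decoder for a smooth code already tolerates corruption: if its input is changed on a set `B` of
coordinates, its output can change only when it queries `B`, and by the union bound this has
probability at most `|B| * (c / n)`. Corrupting a fraction `δ` of a codeword therefore lowers the
success probability by at most `δ * c`, which equals `η / 2` for `δ = η / (2 * c)`.
-/

namespace Decoder

variable {n q : ℕ} (D : Decoder n q)

theorem queryProb_nonneg (j : Fin n) : 0 ≤ D.queryProb j :=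
  Finset.sum_nonneg fun a _ => ite_nonneg (D.nonneg a) le_rfl

/-- The probability that the decoder `D` queries at least one coordinate in `B`: it
bounds the effect on the output of changing the input on `B`. -/
noncomputable def hitProb (B : Finset (Fin n)) : ℝ :=
  ∑ a : Finset (Fin n) × ((Fin n → Bool) → Bool), if ∃ j ∈ B, j ∈ a.1 then D.p a else 0

theorem hitProb_le_sum_queryProb (B : Finset (Fin n)) :
    D.hitProb B ≤ ∑ j ∈ B, D.queryProb j := by
  unfold hitProb queryProb
  rw [Finset.sum_comm]
  refine Finset.sum_le_sum fun a _ => ?_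
  have nonneg : ∀ j ∈ B, 0 ≤ if j ∈ a.1 then D.p a else 0 :=
    fun j _ => ite_nonneg (D.nonneg a) le_rfl
  split_ifs with hit
  · obtain ⟨j, hjB, hja⟩ := hit
    simpa only [if_pos hja] using Finset.single_le_sum nonneg hjB
  · exact Finset.sum_nonneg nonneg

theorem correctProb_le_correctProb_add_hitProb (y y' : Fin n → Bool) (b : Bool) :
    D.correctProb y' b ≤ D.correctProb y b + D.hitProb {j | y j ≠ y' j} := by
  unfold correctProb hitProb
  rw [← Finset.sum_add_distrib]
  refine Finset.sum_le_sum fun a _ => ?_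
  by_cases hit : ∃ j ∈ ({j | y j ≠ y' j} : Finset (Fin n)), j ∈ a.1
  · rw [if_pos hit]
    have := D.nonneg a
    split_ifs <;> linarith
  · rw [if_neg hit, add_zero]
    rcases eq_or_ne (D.p a) 0 with p_eq | p_ne
    · simp only [p_eq, ite_self, le_refl]
    · have agree : ∀ j ∈ a.1, y j = y' j := fun j hj =>
        by_contra fun differ => hit ⟨j, Finset.mem_filter_univ j |>.2 differ, hj⟩
      rw [D.local_dep a p_ne y y' agree]

theorem correctProb_le_correctProb_add_hammingDist_mul {r : ℝ}
    (query_le : ∀ j, D.queryProb j ≤ r) (y y' : Fin n → Bool) (b : Bool) :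
    D.correctProb y' b ≤ D.correctProb y b + hammingDist y y' * r :=
  calc D.correctProb y' b
    _ ≤ D.correctProb y b + D.hitProb {j | y j ≠ y' j} :=
      D.correctProb_le_correctProb_add_hitProb y y' b
    _ ≤ D.correctProb y b + ∑ j with y j ≠ y' j, D.queryProb j := by
      gcongr
      exact D.hitProb_le_sum_queryProb _
    _ ≤ D.correctProb y b + hammingDist y y' * r := by
      gcongr
      rw [hammingDist, ← nsmul_eq_mul]
      exact Finset.sum_le_card_nsmul _ _ r fun j _ => query_le j

end Decoder

theorem smooth_code_is_LDC_general {k n q : ℕ} (hn : 0 < n) {c η : ℝ} (δ : ℝ)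
    {C : (Fin k → Bool) → Fin n → Bool} (hC : IsSmoothCode k n q c η C) :
    IsLDC k n q δ (η - δ * c) C := by
  intro i
  obtain ⟨D, success, query_le⟩ := hC i
  refine ⟨D, fun x y (dist_le : (hammingDist y (C x) : ℝ) ≤ δ * n) => ?_⟩
  have queryBound_nonneg : 0 ≤ c / n := (D.queryProb_nonneg ⟨0, hn⟩).trans (query_le _)
  have loss_le : hammingDist y (C x) * (c / n) ≤ δ * c :=
    calc hammingDist y (C x) * (c / n)
      _ ≤ δ * n * (c / n) := by gcongr
      _ = δ * c := by field_simp
  linarith [success x,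
    D.correctProb_le_correctProb_add_hammingDist_mul query_le y (C x) (x i)]

/-- Katz–Trevisan, second direction: a `(q,c,η)`-smooth code is a `(q, η/(2c), η/2)`-LDC. -/
theorem smooth_code_is_LDC (k n q : ℕ) (hk : 0 < k) (hn : 0 < n) (hq : 0 < q)
    (c η : ℝ) (hc : 0 < c) (hη : η ∈ Set.Ioc (0 : ℝ) (1/2))
    (C : (Fin k → Bool) → Fin n → Bool) (hC : IsSmoothCode k n q c η C) :
    IsLDC k n q (η / (2 * c)) (η / 2) C := by
  have advantage_eq : η - η / (2 * c) * c = η / 2 := by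
    field_simp
    ring
  simpa only [advantage_eq] using smooth_code_is_LDC_general hn (η / (2 * c)) hC
end

section
/- Let q be a positive integer and let f : {−1,1}^n → ℝ be 1-smooth. Then Σ_{S⊆[n], |S|>q} |f̂(S)| ≤ 1/q, and consequently the degree-q truncation f^{≤q} = Σ_{|S|≤q} f̂(S)·χ_S satisfies ‖f − f^{≤q}‖_{L∞} ≤ 1/q. -/
/-- The Fourier coefficient `f̂(S)` of `f : {−1,1}^n → ℝ`, where `{−1,1}^n` is encoded as
`Fin n → Bool` via `true ↦ 1`, `false ↦ −1`. -/
noncomputable def walshCoeff {n : ℕ} (f : (Fin n → Bool) → ℝ) (S : Finset (Fin n)) : ℝ :=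
  (∑ x : Fin n → Bool, f x * ∏ i ∈ S, (if x i then (1 : ℝ) else -1)) / 2 ^ n

/-- The spectral norm `‖f‖_spec = Σ_S |f̂(S)|`. -/
noncomputable def specNorm {n : ℕ} (f : (Fin n → Bool) → ℝ) : ℝ :=
  ∑ S : Finset (Fin n), |walshCoeff f S|

/-- The `i`-th discrete derivative `D_i f(x) = (f(x) − f(x^i))/2`. -/
noncomputable def discDeriv {n : ℕ} (i : Fin n) (f : (Fin n → Bool) → ℝ) :
    (Fin n → Bool) → ℝ :=
  fun x => (f x - f (Function.update x i (!x i))) / 2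

/-- `f` is `σ`-smooth: every discrete derivative has spectral norm at most `σ/n`. -/
def IsSmoothFn {n : ℕ} (σ : ℝ) (f : (Fin n → Bool) → ℝ) : Prop :=
  ∀ i : Fin n, specNorm (discDeriv i f) ≤ σ / n

/-- `f` has degree at most `d`: all Fourier coefficients on sets of size `> d` vanish. -/
def DegLE {n : ℕ} (d : ℕ) (f : (Fin n → Bool) → ℝ) : Prop :=
  ∀ S : Finset (Fin n), d < S.card → walshCoeff f S = 0

/-!
The derivative `D_i` keeps the coefficients `f̂(S)` with `i ∈ S` and kills the others, so
`∑ i, ‖D_i f‖_spec = ∑ S, |S| * |f̂(S)|`. Smoothness bounds this weighted sum, and Markov's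
inequality bounds the mass of the `f̂(S)` with `|S|` large. Since `|χ_S| = 1`, Fourier inversion
turns this mass into an `L∞` bound for the truncation error.
-/

open Finset

section WalshChar

variable {ι : Type*}

/-- The Walsh character `χ_S` on the cube `{−1,1}^ι`, with signs encoded as in `walshCoeff`. It
names the product that `walshCoeff` and `smooth_tail_bound` write out, and unfolds to it. -/
noncomputable def walshChar (S : Finset ι) (x : ι → Bool) : ℝ :=
  ∏ i ∈ S, (if x i then (1 : ℝ) else -1)

theorem abs_walshChar (S : Finset ι) (x : ι → Bool) : |walshChar S x| = 1 := by
  rw [walshChar, abs_prod]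
  exact prod_eq_one fun i _ => by split_ifs <;> simp

-- The sum over `S` factors as the product over `i` of `1 + x i * y i`, each factor `2` or `0`.
theorem sum_walshChar_mul_walshChar [Fintype ι] (x y : ι → Bool) :
    ∑ S, walshChar S x * walshChar S y = if x = y then 2 ^ Fintype.card ι else 0 := by
  have factor (a b : Bool) :
      (1 : ℝ) + (if a then 1 else -1) * (if b then 1 else -1) = if a = b then 2 else 0 := by
    cases a <;> cases b <;> norm_num
  simp only [walshChar, ← prod_mul_distrib]
  rw [← powerset_univ, ← prod_one_add, prod_congr rfl fun i _ => factor (x i) (y i)]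
  split_ifs with hxy
  · simp [hxy]
  · obtain ⟨i, hi⟩ := Function.ne_iff.mp hxy
    exact prod_eq_zero (mem_univ i) (if_neg hi)

variable [DecidableEq ι]

theorem walshChar_update_not_of_notMem {S : Finset ι} {i : ι} (hi : i ∉ S) (x : ι → Bool) :
    walshChar S (Function.update x i (!x i)) = walshChar S x :=
  prod_congr rfl fun _ hj => by rw [Function.update_of_ne (ne_of_mem_of_not_mem hj hi)]

theorem walshChar_update_not_of_mem {S : Finset ι} {i : ι} (hi : i ∈ S) (x : ι → Bool) :
    walshChar S (Function.update x i (!x i)) = -walshChar S x := by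
  have mul_erase (y : ι → Bool) :
      walshChar S y = (if y i then (1 : ℝ) else -1) * walshChar (S.erase i) y :=
    (mul_prod_erase S _ hi).symm
  rw [mul_erase, mul_erase, walshChar_update_not_of_notMem (notMem_erase i S),
    Function.update_self]
  cases x i <;> simp

theorem walshChar_update_not (S : Finset ι) (i : ι) (x : ι → Bool) :
    walshChar S (Function.update x i (!x i)) = (if i ∈ S then -1 else 1) * walshChar S x := by
  split_ifs with hi
  · rw [walshChar_update_not_of_mem hi, neg_one_mul]
  · rw [walshChar_update_not_of_notMem hi, one_mul]

theorem involutive_update_not (i : ι) :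
    Function.Involutive fun x : ι → Bool => Function.update x i (!x i) :=
  fun x => by simp

end WalshChar

section Fourier

variable {n : ℕ} (f : (Fin n → Bool) → ℝ)

theorem walshCoeff_eq_sum_walshChar (S : Finset (Fin n)) :
    walshCoeff f S = (∑ x, f x * walshChar S x) / 2 ^ n :=
  rfl

theorem sum_walshCoeff_mul_walshChar (x : Fin n → Bool) :
    ∑ S, walshCoeff f S * walshChar S x = f x := by
  calc ∑ S, walshCoeff f S * walshChar S x
      = (∑ S, ∑ y, f y * (walshChar S y * walshChar S x)) / 2 ^ n := by
        simp only [walshCoeff_eq_sum_walshChar, div_mul_eq_mul_div, sum_mul, sum_div, mul_assoc]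
    _ = (∑ y, f y * ∑ S, walshChar S y * walshChar S x) / 2 ^ n := by
        rw [sum_comm]
        simp only [mul_sum]
    _ = f x := by simp [sum_walshChar_mul_walshChar]

theorem abs_sub_sum_walshCoeff_mul_walshChar_le (𝒜 : Finset (Finset (Fin n)))
    (x : Fin n → Bool) :
    |f x - ∑ S ∈ 𝒜, walshCoeff f S * walshChar S x| ≤ ∑ S ∈ 𝒜ᶜ, |walshCoeff f S| := by
  calc |f x - ∑ S ∈ 𝒜, walshCoeff f S * walshChar S x|
      = |∑ S ∈ 𝒜ᶜ, walshCoeff f S * walshChar S x| := by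
        rw [← sum_walshCoeff_mul_walshChar f x, ← sum_add_sum_compl 𝒜, add_sub_cancel_left]
    _ ≤ ∑ S ∈ 𝒜ᶜ, |walshCoeff f S * walshChar S x| := abs_sum_le_sum_abs _ _
    _ = ∑ S ∈ 𝒜ᶜ, |walshCoeff f S| := by simp only [abs_mul, abs_walshChar, mul_one]

theorem walshCoeff_comp_update_not (i : Fin n) (S : Finset (Fin n)) :
    walshCoeff (fun x => f (Function.update x i (!x i))) S =
      (if i ∈ S then -1 else 1) * walshCoeff f S := by
  simp only [walshCoeff_eq_sum_walshChar, ← mul_div_assoc, mul_sum]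
  congr 1
  refine Fintype.sum_equiv (involutive_update_not i).toPerm _ _ fun x => ?_
  rw [Function.Involutive.coe_toPerm, walshChar_update_not]
  split_ifs <;> ring

theorem walshCoeff_discDeriv (i : Fin n) (S : Finset (Fin n)) :
    walshCoeff (discDeriv i f) S = if i ∈ S then walshCoeff f S else 0 := by
  have coeff_sub : walshCoeff (discDeriv i f) S =
      (walshCoeff f S - walshCoeff (fun x => f (Function.update x i (!x i))) S) / 2 := by
    simp only [walshCoeff_eq_sum_walshChar, discDeriv, div_mul_eq_mul_div, sub_mul, ← sum_div,
      sum_sub_distrib]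
    ring
  rw [coeff_sub, walshCoeff_comp_update_not]
  split_ifs <;> ring

theorem specNorm_discDeriv (i : Fin n) :
    specNorm (discDeriv i f) = ∑ S with i ∈ S, |walshCoeff f S| := by
  simp only [specNorm, walshCoeff_discDeriv, apply_ite abs, abs_zero, sum_filter]

theorem sum_specNorm_discDeriv :
    ∑ i, specNorm (discDeriv i f) = ∑ S : Finset (Fin n), #S * |walshCoeff f S| := by
  simp only [specNorm_discDeriv, sum_filter]
  rw [sum_comm]
  simp

variable {f} {σ : ℝ}

theorem IsSmoothFn.sum_card_mul_abs_walshCoeff_le (hf : IsSmoothFn σ f) (hσ : 0 ≤ σ) :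
    ∑ S : Finset (Fin n), #S * |walshCoeff f S| ≤ σ := by
  calc ∑ S : Finset (Fin n), #S * |walshCoeff f S|
      = ∑ i, specNorm (discDeriv i f) := (sum_specNorm_discDeriv f).symm
    _ ≤ ∑ _i : Fin n, σ / n := sum_le_sum fun i _ => hf i
    _ = σ * (n / n) := by simp [mul_div_left_comm]
    _ ≤ σ := mul_le_of_le_one_right hσ (div_self_le_one _)

theorem IsSmoothFn.sum_abs_walshCoeff_le (hf : IsSmoothFn σ f) (hσ : 0 ≤ σ) (q : ℕ) :
    ∑ S with q < #S, |walshCoeff f S| ≤ σ / (q + 1) := by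
  rw [le_div_iff₀' (by positivity), mul_sum]
  calc ∑ S with q < #S, (q + 1) * |walshCoeff f S|
      ≤ ∑ S with q < #S, #S * |walshCoeff f S| := by
        gcongr with S hS
        exact_mod_cast (mem_filter.mp hS).2
    _ ≤ ∑ S : Finset (Fin n), #S * |walshCoeff f S| :=
        sum_le_univ_sum_of_nonneg fun S => by positivity
    _ ≤ σ := hf.sum_card_mul_abs_walshCoeff_le hσ

theorem smooth_tail_bound_general (hf : IsSmoothFn σ f) (hσ : 0 ≤ σ) (q : ℕ) :
    ∑ S with q < #S, |walshCoeff f S| ≤ σ / (q + 1) ∧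
    ∀ x, |f x - ∑ S with #S ≤ q, walshCoeff f S * walshChar S x| ≤ σ / (q + 1) := by
  have tail_le := hf.sum_abs_walshCoeff_le hσ q
  refine ⟨tail_le, fun x => (abs_sub_sum_walshCoeff_mul_walshChar_le f _ x).trans ?_⟩
  simpa only [compl_filter, not_le] using tail_le

end Fourier

/-- A 1-smooth function has Fourier tail mass at most `1/q` above level `q`, and hence its
degree-`q` truncation approximates it within `1/q` in `L∞`. -/
theorem smooth_tail_bound (n q : ℕ) (hq : 0 < q)
    (f : (Fin n → Bool) → ℝ) (hf : IsSmoothFn 1 f) :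
    (∑ S ∈ Finset.univ.filter (fun S : Finset (Fin n) => q < S.card),
        |walshCoeff f S|) ≤ 1 / q ∧
    ∀ x : Fin n → Bool,
      |f x - ∑ S ∈ Finset.univ.filter (fun S : Finset (Fin n) => S.card ≤ q),
          walshCoeff f S * ∏ i ∈ S, (if x i then (1 : ℝ) else -1)| ≤ 1 / q := by
  have inv_le : 1 / ((q : ℝ) + 1) ≤ 1 / q := by gcongr; simp
  exact (smooth_tail_bound_general hf zero_le_one q).imp (le_trans · inv_le)
    fun h x => (h x).trans inv_le
end
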